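/- For L ≥ 2, every f_L ∈ Y_{n₁,…,n_{L−1}} can be represented as a CPL spline function: there exist N ≤ ∏_{ℓ=1}^{L−1}(n_ℓ + 1) − 1, real coefficients q₀, q₁, α₁, …, α_N and strictly ordered knots ξ₁ < ξ₂ < … < ξ_N such that f_L(t) = q₁·t + q₀ + Σ_{k=1}^{N} α_k·σ(t − ξ_k) for all t ∈ ℝ; moreover q₁ = lim_{t→−∞} f_L′(t) and q₀ = lim_{t→−∞} (f_L(t) − q₁·t). -/

import Mathlib

/-- The ReLU function `σ(x) = max(x,0)`. -/
noncomputable def relu (x : ℝ) : ℝ := max x 0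

/-- `f` belongs to the deep ReLU network class `Y_{n₁,…,n_{L−1}}` with `L−1` hidden
layers of widths `n 1, …, n (L−1)` (input and output dimension `1`):
`F₁(t) = t·A¹ + b¹`, `F_ℓ(t) = A^ℓ σ(F_{ℓ−1}(t)) + t·c^ℓ + b^ℓ` for `ℓ = 2,…,L−1`, and
`f(t) = A^L σ(F_{L−1}(t)) + t·c^L + b^L`. -/
def IsDeepReLU (L : ℕ) (n : ℕ → ℕ) (f : ℝ → ℝ) : Prop :=
  ∃ (F : (ℓ : ℕ) → ℝ → Fin (n ℓ) → ℝ)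
    (A1 : Fin (n 1) → ℝ)
    (A : (ℓ : ℕ) → Fin (n ℓ) → Fin (n (ℓ - 1)) → ℝ)
    (b c : (ℓ : ℕ) → Fin (n ℓ) → ℝ)
    (AL : Fin (n (L - 1)) → ℝ) (cL bL : ℝ),
    (∀ t i, F 1 t i = t * A1 i + b 1 i) ∧
    (∀ ℓ, 2 ≤ ℓ → ℓ ≤ L - 1 → ∀ t i,
      F ℓ t i = (∑ k, A ℓ i k * relu (F (ℓ - 1) t k)) + t * c ℓ i + b ℓ i) ∧
    (∀ t, f t = (∑ k, AL k * relu (F (L - 1) t k)) + t * cL + bL)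

/-- `f` is a spline with knots in the finite set `S`. -/
def SplineOn (S : Finset ℝ) (f : ℝ → ℝ) : Prop :=
  ∃ (q0 q1 : ℝ) (α : ℝ → ℝ), ∀ t, f t = q1 * t + q0 + ∑ s ∈ S, α s * relu (t - s)

theorem relu_of_nonneg {x : ℝ} (h : 0 ≤ x) : relu x = x := max_eq_left h

theorem relu_of_nonpos {x : ℝ} (h : x ≤ 0) : relu x = 0 := max_eq_right h

theorem SplineOn.mono {S T : Finset ℝ} {f : ℝ → ℝ} (h : SplineOn S f) (hST : S ⊆ T) :
    SplineOn T f := by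
  classical
  obtain ⟨q0, q1, α, hf⟩ := h
  refine ⟨q0, q1, fun s => if s ∈ S then α s else 0, fun t => ?_⟩
  rw [hf t]
  congr 1
  rw [← Finset.sum_subset hST]
  · refine Finset.sum_congr rfl fun s hs => ?_
    simp [hs]
  · intro s _ hs
    simp [hs]

theorem SplineOn.affine (S : Finset ℝ) (p q : ℝ) : SplineOn S (fun t => p * t + q) :=
  ⟨q, p, fun _ => 0, fun t => by simp⟩

theorem SplineOn.knot {S : Finset ℝ} {a : ℝ} (h : a ∈ S) : SplineOn S (fun t => relu (t - a)) := by
  have : SplineOn {a} (fun t => relu (t - a)) := ⟨0, 0, fun _ => 1, fun t => by simp⟩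
  exact this.mono (by simpa using h)

theorem SplineOn.add {S : Finset ℝ} {f g : ℝ → ℝ} (hf : SplineOn S f) (hg : SplineOn S g) :
    SplineOn S (fun t => f t + g t) := by
  obtain ⟨a0, a1, α, h1⟩ := hf
  obtain ⟨b0, b1, β, h2⟩ := hg
  refine ⟨a0 + b0, a1 + b1, fun s => α s + β s, fun t => ?_⟩
  simp only [h1, h2, add_mul, Finset.sum_add_distrib]
  ring

theorem SplineOn.smul {S : Finset ℝ} {f : ℝ → ℝ} (c : ℝ) (hf : SplineOn S f) :
    SplineOn S (fun t => c * f t) := by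
  obtain ⟨a0, a1, α, h1⟩ := hf
  refine ⟨c * a0, c * a1, fun s => c * α s, fun t => ?_⟩
  simp only [h1, mul_assoc, ← Finset.mul_sum]
  ring

theorem SplineOn.sum {S : Finset ℝ} {ι : Type*} (I : Finset ι) (f : ι → ℝ → ℝ)
    (hf : ∀ i, SplineOn S (f i)) : SplineOn S (fun t => ∑ i ∈ I, f i t) := by
  classical
  induction I using Finset.induction_on with
  | empty => simpa using SplineOn.affine S 0 0
  | insert i I hi ih =>
    simp only [Finset.sum_insert hi]
    exact (hf i).add ih

theorem relu_affine (p q : ℝ) :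
    ∃ u v γ c : ℝ, ∀ t, relu (p * t + q) = u * t + v + γ * relu (t - c) := by
  rcases lt_trichotomy p 0 with hp | hp | hp
  · refine ⟨p, q, -p, -q / p, fun t => ?_⟩
    have e : p * t + q = p * (t - -q / p) := by
      have hp0 : p ≠ 0 := by first | exact hp.ne | exact hp.ne'
      field_simp
      ring
    rw [e]
    rcases le_total (t - -q / p) 0 with h | h
    · rw [relu_of_nonpos h, relu_of_nonneg (mul_nonneg_of_nonpos_of_nonpos hp.le h), ← e]; ring
    · rw [relu_of_nonneg h, relu_of_nonpos (mul_nonpos_of_nonpos_of_nonneg hp.le h)]; ring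
  · exact ⟨0, relu q, 0, 0, fun t => by simp [hp]⟩
  · refine ⟨0, 0, p, -q / p, fun t => ?_⟩
    have e : p * t + q = p * (t - -q / p) := by
      have hp0 : p ≠ 0 := by first | exact hp.ne | exact hp.ne'
      field_simp
      ring
    rw [e]
    rcases le_total (t - -q / p) 0 with h | h
    · rw [relu_of_nonpos h, relu_of_nonpos (mul_nonpos_of_nonneg_of_nonpos hp.le h)]; ring
    · rw [relu_of_nonneg h, relu_of_nonneg (mul_nonneg hp.le h)]; ring

theorem relu_affine_right (p q a : ℝ) :
    ∃ u v γ c : ℝ, a ≤ c ∧ ∀ t, a ≤ t → relu (p * t + q) = u * t + v + γ * relu (t - c) := by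
  obtain ⟨u, v, γ, c, h⟩ := relu_affine p q
  rcases le_total a c with hc | hc
  · exact ⟨u, v, γ, c, hc, fun t _ => h t⟩
  · refine ⟨u + γ, v - γ * c, 0, a, le_rfl, fun t ht => ?_⟩
    rw [h, relu_of_nonneg (by linarith : 0 ≤ t - c)]
    ring

theorem affine_beyond {S : Finset ℝ} {a : ℝ} (hS : ∀ s ∈ S, s < a) {f : ℝ → ℝ}
    (hf : SplineOn S f) : ∃ r w : ℝ, ∀ t, a ≤ t → f t = r * t + w := by
  obtain ⟨q0, q1, α, h⟩ := hf
  refine ⟨q1 + ∑ s ∈ S, α s, q0 - ∑ s ∈ S, α s * s, fun t ht => ?_⟩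
  have : ∑ s ∈ S, α s * relu (t - s) = ∑ s ∈ S, (α s * t - α s * s) := by
    refine Finset.sum_congr rfl fun s hs => ?_
    rw [relu_of_nonneg (by linarith [hS s hs])]; ring
  rw [h, this, Finset.sum_sub_distrib, ← Finset.sum_mul]
  ring

theorem spline_restrict {S : Finset ℝ} (a : ℝ) {f : ℝ → ℝ} (hf : SplineOn S f) :
    ∃ g, SplineOn (S.filter (· < a)) g ∧ ∀ t, t ≤ a → f t = g t := by
  obtain ⟨q0, q1, α, h⟩ := hf
  refine ⟨_, ⟨q0, q1, α, fun t => rfl⟩, fun t ht => ?_⟩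
  rw [h]
  congr 1
  symm
  refine Finset.sum_subset (Finset.filter_subset _ _) fun s hs hs' => ?_
  have : a ≤ s := by
    by_contra hc
    exact hs' (Finset.mem_filter.2 ⟨hs, not_le.1 hc⟩)
  rw [relu_of_nonpos (by linarith), mul_zero]

theorem relu_spline (S : Finset ℝ) : ∀ g : ℝ → ℝ, SplineOn S g →
    ∃ T : Finset ℝ, T.card ≤ S.card + 1 ∧ SplineOn (S ∪ T) (fun t => relu (g t)) := by
  classical
  induction S using Finset.induction_on_max with
  | empty =>
    rintro g ⟨q0, q1, α, h⟩
    obtain ⟨u, v, γ, c, h'⟩ := relu_affine q1 q0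
    refine ⟨{c}, by simp, ?_⟩
    have : (fun t => relu (g t)) = fun t => (u * t + v) + γ * relu (t - c) := by
      funext t
      rw [h t, Finset.sum_empty, add_zero, h' t]
    rw [this]
    exact (SplineOn.affine _ _ _).add ((SplineOn.knot (by simp)).smul γ)
  | insert a S hS ih =>
    rintro g hg
    have haS : a ∉ S := fun h => lt_irrefl _ (hS a h)
    obtain ⟨q0, q1, α, h⟩ := hg
    set g' : ℝ → ℝ := fun t => q1 * t + q0 + ∑ s ∈ S, α s * relu (t - s) with hg'
    have hg's : SplineOn S g' := ⟨q0, q1, α, fun t => rfl⟩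
    have hgg : ∀ t, g t = g' t + α a * relu (t - a) := by
      intro t
      rw [h, Finset.sum_insert haS, hg']
      ring
    obtain ⟨T, hT, hsp⟩ := ih g' hg's
    obtain ⟨h0, hh0, heq⟩ := spline_restrict a hsp
    obtain ⟨r, w, hrw⟩ := affine_beyond (fun s hs => (Finset.mem_filter.1 hs).2) hh0
    obtain ⟨r', w', hrw'⟩ := affine_beyond hS hg's
    obtain ⟨u, v, γ, c, hac, huv⟩ := relu_affine_right (r' + α a) (w' - α a * a) a
    refine ⟨insert c T, ?_, ?_⟩
    · rw [Finset.card_insert_of_notMem haS]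
      exact (Finset.card_insert_le _ _).trans (by omega)
    have hga : ∀ t, a ≤ t → relu (g t) = u * t + v + γ * relu (t - c) := by
      intro t ht
      rw [← huv t ht, hgg, hrw' t ht, relu_of_nonneg (by linarith : 0 ≤ t - a)]
      congr 1
      ring
    have hgl : ∀ t, t ≤ a → relu (g t) = h0 t := by
      intro t ht
      rw [hgg, relu_of_nonpos (by linarith : t - a ≤ 0), mul_zero, add_zero]
      exact heq t ht
    have hval : r * a + w = u * a + v := by
      rw [← hrw a le_rfl, ← hgl a le_rfl, hga a le_rfl,
        relu_of_nonpos (by linarith : a - c ≤ 0), mul_zero, add_zero]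
    have : (fun t => relu (g t)) =
        fun t => (h0 t + (u - r) * relu (t - a)) + γ * relu (t - c) := by
      funext t
      rcases le_total t a with ht | ht
      · rw [hgl t ht, relu_of_nonpos (by linarith : t - a ≤ 0),
          relu_of_nonpos (by linarith : t - c ≤ 0)]
        ring
      · rw [hga t ht, hrw t ht, relu_of_nonneg (by linarith : 0 ≤ t - a)]
        linear_combination -hval
    rw [this]
    refine ((hh0.mono ?_).add ((SplineOn.knot (by simp)).smul _)).add
      ((SplineOn.knot (by simp)).smul _)
    intro x hx
    have := (Finset.mem_filter.1 hx).1
    simp only [Finset.mem_union, Finset.mem_insert] at this ⊢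
    tauto

theorem layer_step {m : ℕ} (S : Finset ℝ) (G : ℝ → Fin m → ℝ)
    (hG : ∀ k, SplineOn S (fun t => G t k)) :
    ∃ S' : Finset ℝ, S'.card + 1 ≤ (S.card + 1) * (m + 1) ∧
      ∀ k, SplineOn S' (fun t => relu (G t k)) := by
  classical
  choose T hT hsp using fun k => relu_spline S _ (hG k)
  refine ⟨S ∪ Finset.univ.biUnion T, ?_, fun k => (hsp k).mono ?_⟩
  · have h1 := Finset.card_union_le S (Finset.univ.biUnion T)
    have h2 := Finset.card_biUnion_le_card_mul Finset.univ T (S.card + 1) (fun k _ => hT k)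
    rw [Finset.card_univ, Fintype.card_fin] at h2
    nlinarith
  · exact Finset.union_subset_union le_rfl (Finset.subset_biUnion_of_mem T (Finset.mem_univ k))

theorem spline_final {S : Finset ℝ} {f : ℝ → ℝ} (hf : SplineOn S f) :
    ∃ (q0 q1 : ℝ) (α ξ : Fin S.card → ℝ), StrictMono ξ ∧
        (∀ t, f t = q1 * t + q0 + ∑ k, α k * relu (t - ξ k)) ∧
        Filter.Tendsto (deriv f) Filter.atBot (nhds q1) ∧
        Filter.Tendsto (fun t => f t - q1 * t) Filter.atBot (nhds q0) := by
  obtain ⟨q0, q1, α, h⟩ := hf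
  obtain ⟨M, hM⟩ := S.finite_toSet.bddBelow
  have hlow : ∀ t, t < M → f t = q1 * t + q0 := by
    intro t ht
    rw [h, Finset.sum_eq_zero, add_zero]
    intro s hs
    have : M ≤ s := hM hs
    rw [relu_of_nonpos (by linarith), mul_zero]
  refine ⟨q0, q1, fun k => α (S.orderEmbOfFin rfl k), S.orderEmbOfFin rfl,
    (S.orderEmbOfFin rfl).strictMono, fun t => ?_, ?_, ?_⟩
  · rw [h]
    congr 1
    conv_lhs => rw [← Finset.map_orderEmbOfFin_univ S rfl]
    rw [Finset.sum_map]
    rfl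
  · refine tendsto_const_nhds.congr' ?_
    filter_upwards [Filter.eventually_lt_atBot M] with t ht
    have : f =ᶠ[nhds t] fun t => q1 * t + q0 := by
      filter_upwards [Iio_mem_nhds ht] with x hx using hlow x hx
    rw [this.deriv_eq]
    simp
  · refine tendsto_const_nhds.congr' ?_
    filter_upwards [Filter.eventually_lt_atBot M] with t ht
    rw [hlow t ht]; ring

/-- every `f_L ∈ Y_{n₁,…,n_{L−1}}` is a CPL spline with at most
`∏_{ℓ=1}^{L−1}(n_ℓ+1) − 1` knots, where `q₁ = lim_{t→−∞} f_L′(t)` and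
`q₀ = lim_{t→−∞}(f_L(t) − q₁ t)`. -/
theorem deep_relu_is_spline (L : ℕ) (hL : 2 ≤ L) (n : ℕ → ℕ) (f : ℝ → ℝ)
    (hf : IsDeepReLU L n f) :
    ∃ N, N ≤ (∏ ℓ ∈ Finset.Icc 1 (L - 1), (n ℓ + 1)) - 1 ∧
      ∃ (q0 q1 : ℝ) (α ξ : Fin N → ℝ), StrictMono ξ ∧
        (∀ t, f t = q1 * t + q0 + ∑ k, α k * relu (t - ξ k)) ∧
        Filter.Tendsto (deriv f) Filter.atBot (nhds q1) ∧
        Filter.Tendsto (fun t => f t - q1 * t) Filter.atBot (nhds q0) := by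
  obtain ⟨F, A1, A, b, c, AL, cL, bL, h1, h2, h3⟩ := hf
  have key : ∀ l, l + 1 ≤ L - 1 → ∃ S : Finset ℝ,
      S.card + 1 ≤ (∏ ℓ ∈ Finset.Icc 1 (l + 1), (n ℓ + 1)) ∧
      ∀ k, SplineOn S (fun t => relu (F (l + 1) t k)) := by
    intro l
    induction l with
    | zero =>
      intro _
      obtain ⟨S', hc, hS'⟩ := layer_step ∅ (F (0 + 1)) (fun k => by
        have : (fun t => F (0 + 1) t k) = fun t => A1 k * t + b 1 k := by
          funext t
          rw [h1 t k, mul_comm]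
        rw [this]
        exact SplineOn.affine _ _ _)
      exact ⟨S', by simpa using hc, hS'⟩
    | succ l ih =>
      intro hl
      obtain ⟨S, hS, hsp⟩ := ih (by omega)
      obtain ⟨S', hc, hS'⟩ := layer_step S (F (l + 1 + 1)) (fun k => by
        have : (fun t => F (l + 1 + 1) t k) = fun t =>
            (∑ j, A (l + 1 + 1) k j * relu (F (l + 1) t j)) +
              (c (l + 1 + 1) k * t + b (l + 1 + 1) k) := by
          funext t
          rw [h2 (l + 1 + 1) (by omega) hl t k, mul_comm t, add_assoc]
          rfl
        rw [this]
        exact (SplineOn.sum _ _ fun j => (hsp j).smul _).add (SplineOn.affine _ _ _))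
      refine ⟨S', ?_, hS'⟩
      rw [Finset.prod_Icc_succ_top (by omega)]
      exact hc.trans (Nat.mul_le_mul_right _ hS)
  obtain ⟨l, rfl⟩ : ∃ l, L = l + 2 := ⟨L - 2, by omega⟩
  obtain ⟨S, hS, hsp⟩ := key l (by omega)
  have hfS : SplineOn S f := by
    have : f = fun t => (∑ k, AL k * relu (F (l + 1) t k)) + (cL * t + bL) := by
      funext t
      rw [h3 t, mul_comm t, add_assoc]
      rfl
    rw [this]
    exact (SplineOn.sum _ _ fun j => (hsp j).smul _).add (SplineOn.affine _ _ _)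
  exact ⟨S.card, Nat.le_sub_of_add_le hS, spline_final hfS⟩
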